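/- Let Λ′ ∈ P^+_{l′}, Λ″ ∈ P^+_{l″}, p ∈ 𝒫(Λ′,Λ″), λ = λ(p) and ♯λ = λ(♯p). Then for every k > 0, the total number of length-k rows of ♯λ equals the total number of length-k rows of λ. -/

import Mathlib

/-!
Let `e_k` be the multiset of `l''` residues whose step weight is the `k`-th step of `p - Λ'`.
The step of `♯p` at time `k` is then given by the reflection `i ↦ k - i` of the complementary
multiset `p_k - e_k`, of size `l'`, because a step weight together with its total determines the
multiset (`eq_of_step_of_sum`).

For any multipartition, the number `ψ_r(k)` of length-`k` rows whose right end has colour `r`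
satisfies `ψ_r(k) - ψ_{r-1}(k) = e_{k-1}(r-1) - e_k(r)` (`psiCount_step`): in each component the
colours of these right ends run through an interval, and the count telescopes. So the path
determines `ψ(k)` up to an additive constant. In a highest-lift this constant is fixed by the
condition `min_r ψ_r(k) = 0` (`exists_psi_zero`): if all `ψ_r(k)` were positive, the columns `≤ k`
could be cyclically relabelled among the components, yielding a cylindrical multipartition with the
same path that is strictly higher.

Under the reflection the increments of `ψ(k)` for `♯λ` and for `λ` correspond to each other, since
`p_k - p_{k-1}` is the step weight of `e_{k-1}`. Both functions have minimum `0`, so they agree up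
to the reflection `r ↦ k - 1 - r`, and summing over `r` gives the equality of row counts.
-/


open scoped BigOperators

namespace BF

/-- The fundamental weight `Λ_i`, viewed as the indicator function `ZMod n → ℤ` of `i`. -/
def Lam (n : ℕ) (i : ZMod n) : ZMod n → ℤ := fun j => if j = i then 1 else 0

/-- A weight is dominant if all its coefficients are nonnegative. -/
def Dominant (n : ℕ) (a : ZMod n → ℤ) : Prop := ∀ i, 0 ≤ a i

/-- The step weight of `e : ZMod n → ℕ`: its `Λ_j`-coefficient is `e (j-1) - e j`. -/
def stepWt (n : ℕ) (e : ZMod n → ℕ) : ZMod n → ℤ := fun j => (e (j - 1) : ℤ) - (e j : ℤ)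

/-- Membership in `A_l^+`: `d` is the step weight of some `e : ZMod n → ℕ` of total sum `l`. -/
def InA (n : ℕ) [NeZero n] (l : ℕ) (d : ZMod n → ℤ) : Prop :=
  ∃ e : ZMod n → ℕ, (∑ i, e i) = l ∧ d = stepWt n e

/-- The ground-state path of the weight `Λ`: `p̄_k (i) = Λ (i - k)`,
which is the coefficient form of `p̄_k = Λ_{v₀+k} + ⋯ + Λ_{v_{l-1}+k}`. -/
def gsp (n : ℕ) (Λ : ZMod n → ℤ) (k : ℕ) : ZMod n → ℤ := fun i => Λ (i - (k : ZMod n))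

/-- `p` is a `Λ`-path of level `l`. -/
def IsPath (n : ℕ) [NeZero n] (l : ℕ) (Λ : ZMod n → ℤ) (p : ℕ → ZMod n → ℤ) : Prop :=
  (∀ k, InA n l (fun i => p (k + 1) i - p k i)) ∧ ∃ K, ∀ k ≥ K, p k = gsp n Λ k

/-- The length of a `Λ`-path: least `K` with `p k = p̄ k` for all `k ≥ K`. -/
noncomputable def pathLen (n : ℕ) (Λ : ZMod n → ℤ) (p : ℕ → ZMod n → ℤ) : ℕ :=
  sInf {K | ∀ k ≥ K, p k = gsp n Λ k}

/-- `f : ℕ → ℕ` is a partition (rows are indexed from `0`). -/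
def IsPartitionF (f : ℕ → ℕ) : Prop := (∀ i, f (i + 1) ≤ f i) ∧ ∃ N, ∀ i ≥ N, f i = 0

/-- An `l`-multipartition. -/
def IsMP (l : ℕ) (lam : Fin l → ℕ → ℕ) : Prop := ∀ j, IsPartitionF (lam j)

/-- The data `v : Fin l → ℕ` of a decomposition `Λ = Λ_{v 0} + ⋯ + Λ_{v (l-1)}`
with `0 ≤ v 0 ≤ ⋯ ≤ v (l-1) < n`. -/
def SortedV (n l : ℕ) (v : Fin l → ℕ) : Prop := Monotone v ∧ ∀ j, v j < n

/-- The weight `Λ = Λ_{v 0} + ⋯ + Λ_{v (l-1)}` determined by `v`. -/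
def wtOf (n : ℕ) {l : ℕ} (v : Fin l → ℕ) : ZMod n → ℤ :=
  fun i => ((Finset.univ.filter fun j : Fin l => ((v j : ZMod n) = i)).card : ℤ)

/-- The colour of the node in (0-based) row `i`, (1-based) column `c` of component `j`:
`(c - (i+1) + v j) mod n`. -/
def colour (n : ℕ) {l : ℕ} (v : Fin l → ℕ) (j : Fin l) (i c : ℕ) : ZMod n :=
  (c : ZMod n) - (i : ZMod n) - 1 + (v j : ZMod n)

/-- `N^r(λ)`: the total number of nodes of colour `r` in the multipartition `λ`. -/
noncomputable def Ncolour (n : ℕ) {l : ℕ} (v : Fin l → ℕ) (lam : Fin l → ℕ → ℕ)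
    (r : ZMod n) : ℕ :=
  Nat.card {x : Fin l × ℕ × ℕ //
    1 ≤ x.2.2 ∧ x.2.2 ≤ lam x.1 x.2.1 ∧ colour n v x.1 x.2.1 x.2.2 = r}

/-- The height `f′_m` of the `m`-th column of the partition `f`. -/
noncomputable def colHt (f : ℕ → ℕ) (m : ℕ) : ℕ := Nat.card {i : ℕ // m ≤ f i}

/-- The function `e` whose step weight is the `k`-th step of `π(λ)`:
`e i = #{j : v j + k - λ^{(j)′}_{k+1} ≡ i mod n}`. -/
noncomputable def eFun (n : ℕ) {l : ℕ} (v : Fin l → ℕ) (lam : Fin l → ℕ → ℕ) (k : ℕ) :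
    ZMod n → ℕ :=
  fun i => Nat.card {j : Fin l //
    (v j : ZMod n) + (k : ZMod n) - (colHt (lam j) (k + 1) : ZMod n) = i}

/-- `p = π(λ)` where `λ` is an `l`-multipartition of highest weight `wtOf n v`. -/
def IsPi (n : ℕ) {l : ℕ} (v : Fin l → ℕ) (lam : Fin l → ℕ → ℕ)
    (p : ℕ → ZMod n → ℤ) : Prop :=
  (∀ k, (fun i => p (k + 1) i - p k i) = stepWt n (eFun n v lam k)) ∧
  ∃ K, ∀ k ≥ K, p k = gsp n (wtOf n v) k

/-- `λ` is cylindrical of highest weight `Λ = wtOf n v`. -/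
def Cylindrical (n : ℕ) {l : ℕ} (v : Fin l → ℕ) (lam : Fin l → ℕ → ℕ) : Prop :=
  (∀ (j : ℕ) (hj : j + 1 < l) (i : ℕ),
      lam ⟨j + 1, hj⟩ (i + (v ⟨j + 1, hj⟩ - v ⟨j, Nat.lt_of_succ_lt hj⟩)) ≤
        lam ⟨j, Nat.lt_of_succ_lt hj⟩ i) ∧
  ∀ (hl : 0 < l) (i : ℕ),
      lam ⟨0, hl⟩ (i + (n + v ⟨0, hl⟩ - v ⟨l - 1, Nat.sub_lt hl Nat.one_pos⟩)) ≤
        lam ⟨l - 1, Nat.sub_lt hl Nat.one_pos⟩ i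

/-- `λ` is higher than `μ`: every column of each component of `λ` is at most as high as
the corresponding column of `μ`. -/
def Higher {l : ℕ} (lam mu : Fin l → ℕ → ℕ) : Prop :=
  ∀ (j : Fin l) (k : ℕ), 1 ≤ k → colHt (lam j) k ≤ colHt (mu j) k

/-- `λ` is the highest-lift of the path `p`: it is a cylindrical multipartition with
`π(λ) = p` which is higher than every cylindrical multipartition mapping to `p`. -/
def IsHL (n : ℕ) {l : ℕ} (v : Fin l → ℕ) (lam : Fin l → ℕ → ℕ)
    (p : ℕ → ZMod n → ℤ) : Prop :=
  IsMP l lam ∧ Cylindrical n v lam ∧ IsPi n v lam p ∧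
    ∀ mu : Fin l → ℕ → ℕ, IsMP l mu → Cylindrical n v mu → IsPi n v mu p → Higher lam mu

/-- `λ ∈ 𝒴(Λ)` with `Λ = wtOf n v`. -/
def InY (n : ℕ) {l : ℕ} (v : Fin l → ℕ) (lam : Fin l → ℕ → ℕ) : Prop :=
  ∃ p, IsHL n v lam p

/-- `α′_r = -Λ_{r-1} + 2Λ_r - Λ_{r+1}`. -/
def alphaP (n : ℕ) (r : ZMod n) : ZMod n → ℤ :=
  fun i => -(Lam n (r - 1) i) + 2 * Lam n r i - Lam n (r + 1) i

/-- `ψ_r(k)`: the number of length-`k` rows of `λ` whose right end has colour `r`. -/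
noncomputable def psiCount (n : ℕ) {l : ℕ} (v : Fin l → ℕ) (lam : Fin l → ℕ → ℕ)
    (k : ℕ) (r : ZMod n) : ℕ :=
  Nat.card {x : Fin l × ℕ // lam x.1 x.2 = k ∧ colour n v x.1 x.2 k = r}

/-- The number of length-`k` rows of `λ` whose left end has colour `r`. -/
noncomputable def leftCount (n : ℕ) {l : ℕ} (v : Fin l → ℕ) (lam : Fin l → ℕ → ℕ)
    (k : ℕ) (r : ZMod n) : ℕ :=
  Nat.card {x : Fin l × ℕ // lam x.1 x.2 = k ∧ colour n v x.1 x.2 1 = r}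

/-- The total number of length-`k` rows of `λ`. -/
noncomputable def rowCount {l : ℕ} (lam : Fin l → ℕ → ℕ) (k : ℕ) : ℕ :=
  Nat.card {x : Fin l × ℕ // lam x.1 x.2 = k}

/-- `m_r(k)`: the number of `r`-nodes of `λ` in column `k` or to its right. -/
noncomputable def mCount (n : ℕ) {l : ℕ} (v : Fin l → ℕ) (lam : Fin l → ℕ → ℕ)
    (k : ℕ) (r : ZMod n) : ℕ :=
  Nat.card {x : Fin l × ℕ × ℕ //
    k ≤ x.2.2 ∧ x.2.2 ≤ lam x.1 x.2.1 ∧ colour n v x.1 x.2.1 x.2.2 = r}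

/-- `p` is a `(Λ′,Λ″)`-restricted path, where `l''` is the level of `Λ″`:
`p - Λ′ ∈ 𝒫(Λ″)` and `p_k - η̂_k` is dominant for all `k`. -/
def IsRes (n : ℕ) [NeZero n] (l'' : ℕ) (L' L'' : ZMod n → ℤ) (p : ℕ → ZMod n → ℤ) : Prop :=
  IsPath n l'' L'' (fun k i => p k i - L' i) ∧
  ∀ k, ∃ e : ZMod n → ℕ, (∑ i, e i) = l'' ∧
    (fun i => p (k + 1) i - p k i) = stepWt n e ∧ ∀ i, (e i : ℤ) ≤ p k i

/-- The length of a restricted path: `ℓ(p) = ℓ(p - Λ′)`. -/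
noncomputable def resLen (n : ℕ) (L' L'' : ZMod n → ℤ) (p : ℕ → ZMod n → ℤ) : ℕ :=
  sInf {K | ∀ k ≥ K, (fun i => p k i - L' i) = gsp n L'' k}

/-- `♯Λ`. -/
def sharpWt (n : ℕ) (Λ : ZMod n → ℤ) : ZMod n → ℤ := fun i => Λ (-i)

/-- `♯p`: `(♯p)_k (i) = a_{k-i}(k)` where `p_k = ∑ a_i(k) Λ_i`. -/
def sharpPath (n : ℕ) (p : ℕ → ZMod n → ℤ) : ℕ → ZMod n → ℤ :=
  fun k i => p k ((k : ZMod n) - i)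

/-- `θ(a) = 1` if `a ≥ 0`, `0` otherwise. -/
def theta (a : ℤ) : ℕ := if 0 ≤ a then 1 else 0

/-- The function counting the entries of `μ : Fin l → ℕ` in each class mod `n`. -/
def cntF (n : ℕ) {l : ℕ} (μ : Fin l → ℕ) : ZMod n → ℕ :=
  fun i => (Finset.univ.filter fun j : Fin l => ((μ j : ZMod n) = i)).card

/-- The energy function `H` on `A_l^+ × A_l^+`:
`H(α,β) = min_{σ ∈ S_l} ∑_j θ(μ_j - ν_{σ(j)})` where `α`, `β` are the step weights of
`Λ_{μ_0} + ⋯ + Λ_{μ_{l-1}}`, `Λ_{ν_0} + ⋯ + Λ_{ν_{l-1}}` with `0 ≤ μ_j, ν_j < n`. -/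
noncomputable def Hfun (n : ℕ) (l : ℕ) (d d' : ZMod n → ℤ) : ℕ :=
  sInf {m | ∃ μ ν : Fin l → ℕ, (∀ j, μ j < n) ∧ (∀ j, ν j < n) ∧
    d = stepWt n (cntF n μ) ∧ d' = stepWt n (cntF n ν) ∧
    m = Finset.univ.inf' ⟨1, Finset.mem_univ 1⟩
      fun σ : Equiv.Perm (Fin l) => ∑ j, theta ((μ j : ℤ) - (ν (σ j) : ℤ))}

/-- `(j, i)` is a removable `r`-node of `λ` (node at the right end of 0-based row `i`
of component `j`). -/
def RemNode (n : ℕ) {l : ℕ} (v : Fin l → ℕ) (lam : Fin l → ℕ → ℕ) (r : ZMod n)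
    (j : Fin l) (i : ℕ) : Prop :=
  1 ≤ lam j i ∧ lam j (i + 1) < lam j i ∧ colour n v j i (lam j i) = r

/-- `(j, i)` is an addable `r`-node of `λ` (node addable at the end of 0-based row `i`
of component `j`). -/
def AddNode (n : ℕ) {l : ℕ} (v : Fin l → ℕ) (lam : Fin l → ℕ → ℕ) (r : ZMod n)
    (j : Fin l) (i : ℕ) : Prop :=
  (i = 0 ∨ lam j i < lam j (i - 1)) ∧ colour n v j i (lam j i + 1) = r

/-- The diagonal number `d = c - (i+1) + v j` of the addable/removable node
`x = (j, i, isRemovable)`. -/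
def nodeD {l : ℕ} (v : Fin l → ℕ) (lam : Fin l → ℕ → ℕ) (x : Fin l × ℕ × Bool) : ℤ :=
  (if x.2.2 then (lam x.1 x.2.1 : ℤ) else (lam x.1 x.2.1 : ℤ) + 1) - ((x.2.1 : ℤ) + 1) + (v x.1 : ℤ)

/-- The total order on addable/removable nodes: `(d,j) < (d',j')` iff `d < d'`, or
`d = d'` and `j > j'`. -/
def nodeLT {l : ℕ} (v : Fin l → ℕ) (lam : Fin l → ℕ → ℕ) (x y : Fin l × ℕ × Bool) : Prop :=
  nodeD v lam x < nodeD v lam y ∨ (nodeD v lam x = nodeD v lam y ∧ (y.1 : ℕ) < (x.1 : ℕ))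

/-- `L` is the `r`-signature of `λ`: the increasing list of all addable and removable
`r`-nodes (flag `true` = removable, `false` = addable). -/
def IsSig (n : ℕ) {l : ℕ} (v : Fin l → ℕ) (lam : Fin l → ℕ → ℕ) (r : ZMod n)
    (L : List (Fin l × ℕ × Bool)) : Prop :=
  L.Pairwise (nodeLT v lam) ∧
  ∀ x : Fin l × ℕ × Bool, x ∈ L ↔
    ((x.2.2 = true ∧ RemNode n v lam r x.1 x.2.1) ∨
      (x.2.2 = false ∧ AddNode n v lam r x.1 x.2.1))

/-- One step of the reduction procedure on signature words: delete an adjacent pair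
consisting of a removable node (`true`) immediately followed by an addable node (`false`). -/
inductive SigStep : List Bool → List Bool → Prop
  | pair (l₁ l₂ : List Bool) : SigStep (l₁ ++ true :: false :: l₂) (l₁ ++ l₂)


/-! ### Functions on the cycle `ZMod n` -/

/-- A function on `ZMod n` is constant if it is invariant under the unit shift. -/
lemma const_of_shift (n : ℕ) [NeZero n] (g : ZMod n → ℤ) (h : ∀ i, g (i - 1) = g i)
    (i : ZMod n) : g i = g 0 := by
  have key : ∀ m : ℕ, g (m : ZMod n) = g 0 := by
    intro m
    induction m with
    | zero => simp
    | succ m ih =>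
      rw [← h]
      simpa using ih
  have := key i.val
  rwa [ZMod.natCast_zmod_val] at this

/-- A function on `ZMod n` is determined by its increments and its sum. -/
lemma eq_of_step_of_sum (n : ℕ) [NeZero n] (g g' : ZMod n → ℤ)
    (h : ∀ i, g (i - 1) - g i = g' (i - 1) - g' i) (hs : ∑ i, g i = ∑ i, g' i) : g = g' := by
  have hc := const_of_shift n (fun i => g i - g' i) (fun i => by linarith [h i])
  have hz : ∑ i, (g i - g' i) = 0 := by rw [Finset.sum_sub_distrib, hs, sub_self]
  rw [Finset.sum_congr rfl (fun i _ => hc i), Finset.sum_const, Finset.card_univ, ZMod.card,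
    nsmul_eq_mul, mul_eq_zero] at hz
  have hn : (n : ℤ) ≠ 0 := by exact_mod_cast NeZero.ne n
  have h0 := hz.resolve_left hn
  funext i
  linarith [hc i]

/-- A nonnegative function on `ZMod n` that vanishes somewhere is determined by its increments. -/
lemma eq_of_step_of_zero (n : ℕ) [NeZero n] (g g' : ZMod n → ℤ)
    (h : ∀ i, g (i - 1) - g i = g' (i - 1) - g' i) (hg : ∀ i, 0 ≤ g i) (hg' : ∀ i, 0 ≤ g' i)
    (hz : ∃ i, g i = 0) (hz' : ∃ i, g' i = 0) : g = g' := by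
  have hc := const_of_shift n (fun i => g i - g' i) (fun i => by linarith [h i])
  obtain ⟨a, ha⟩ := hz
  obtain ⟨b, hb⟩ := hz'
  funext i
  linarith [hc a, hc b, hc i, hg b, hg' a]

/-- Counting a family `f : Fin l → ZMod n` fibre by fibre. -/
lemma sum_card_fiber (n : ℕ) [NeZero n] {l : ℕ} (f : Fin l → ZMod n) :
    ∑ i, (Finset.univ.filter fun j => f j = i).card = l := by
  have := Finset.card_eq_sum_card_fiberwise (f := f) (s := Finset.univ) (t := Finset.univ)
    (by simp)
  simpa using this.symm

lemma sum_eFun (n : ℕ) [NeZero n] {l : ℕ} (v : Fin l → ℕ) (lam : Fin l → ℕ → ℕ) (k : ℕ) :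
    ∑ i, eFun n v lam k i = l := by
  simp only [eFun, Nat.card_eq_fintype_card, Fintype.card_subtype]
  exact sum_card_fiber n _

lemma sum_wtOf (n : ℕ) [NeZero n] {l : ℕ} (v : Fin l → ℕ) : ∑ i, wtOf n v i = l := by
  simp only [wtOf]
  exact_mod_cast sum_card_fiber n _

lemma sum_sharpWt (n : ℕ) [NeZero n] {l : ℕ} (v : Fin l → ℕ) :
    ∑ i, sharpWt n (wtOf n v) i = l := by
  rw [← sum_wtOf n v]
  exact Equiv.sum_comp (Equiv.neg (ZMod n)) (wtOf n v)

lemma sum_gsp (n : ℕ) [NeZero n] {l : ℕ} (v : Fin l → ℕ) (k : ℕ) :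
    ∑ i, gsp n (wtOf n v) k i = l := by
  rw [← sum_wtOf n v]
  exact Equiv.sum_comp (Equiv.subRight (k : ZMod n)) (wtOf n v)

lemma sum_stepWt (n : ℕ) [NeZero n] (e : ZMod n → ℕ) : ∑ i, stepWt n e i = 0 := by
  simp only [stepWt, Finset.sum_sub_distrib]
  rw [sub_eq_zero]
  exact Equiv.sum_comp (Equiv.subRight (1 : ZMod n)) (fun i => (e i : ℤ))

/-- Every weight of a path `π(λ)` of highest weight `wtOf n v` has level `l`. -/
lemma sum_path (n : ℕ) [NeZero n] {l : ℕ} (v : Fin l → ℕ) (lam : Fin l → ℕ → ℕ)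
    (q : ℕ → ZMod n → ℤ) (h : IsPi n v lam q) (k : ℕ) : ∑ i, q k i = l := by
  obtain ⟨hs, K, hK⟩ := h
  have step : ∀ m, ∑ i, q (m + 1) i = ∑ i, q m i := by
    intro m
    have := sum_stepWt n (eFun n v lam m)
    rw [← hs m, Finset.sum_sub_distrib] at this
    linarith
  have far : ∀ m, ∑ i, q (k + m) i = ∑ i, q k i := by
    intro m
    induction m with
    | zero => rfl
    | succ m ih => rw [← ih, ← step (k + m)]; rfl
  rw [← far K, hK (k + K) (by omega), sum_gsp]

/-! ### Rows of a given length -/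

lemma part_antitone {f : ℕ → ℕ} (h : IsPartitionF f) : Antitone f := antitone_nat_of_succ_le h.1

lemma le_part_iff {f : ℕ → ℕ} (h : IsPartitionF f) {m : ℕ} (hm : 1 ≤ m) (i : ℕ) :
    m ≤ f i ↔ i < colHt f m := by
  obtain ⟨N, hN⟩ := h.2
  have hex : ∃ i, ¬ m ≤ f i := ⟨N, by rw [hN N le_rfl]; omega⟩
  have key : ∀ i, m ≤ f i ↔ i < Nat.find hex := by
    intro i
    constructor
    · intro hi
      by_contra hc
      have h1 := Nat.find_spec hex
      have h2 := part_antitone h (not_lt.mp hc)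
      omega
    · intro hi
      exact not_not.mp (Nat.find_min hex hi)
  have : colHt f m = Nat.find hex := by
    unfold colHt
    rw [Nat.card_congr (Equiv.subtypeEquivRight key)]
    exact (Nat.card_congr (Fin.equivSubtype (n := Nat.find hex)).symm).trans (by simp)
  rw [this]
  exact key i

lemma eq_part_iff {f : ℕ → ℕ} (h : IsPartitionF f) {m : ℕ} (hm : 1 ≤ m) (i : ℕ) :
    f i = m ↔ i ∈ Finset.Ico (colHt f (m + 1)) (colHt f m) := by
  have h1 := le_part_iff h hm i
  have h2 := le_part_iff h (show 1 ≤ m + 1 by omega) i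
  rw [Finset.mem_Ico]
  omega

lemma colHt_anti {f : ℕ → ℕ} (h : IsPartitionF f) {m : ℕ} (hm : 1 ≤ m) :
    colHt f (m + 1) ≤ colHt f m := by
  by_contra hc
  have h1 := le_part_iff h hm (colHt f m)
  have h2 := le_part_iff h (show 1 ≤ m + 1 by omega) (colHt f m)
  omega

/-- The rows of length `k` of the multipartition, as a finite set. -/
noncomputable def rowsOf {l : ℕ} (lam : Fin l → ℕ → ℕ) (k : ℕ) : Finset (Σ _ : Fin l, ℕ) :=
  Finset.univ.sigma fun j => Finset.Ico (colHt (lam j) (k + 1)) (colHt (lam j) k)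

lemma mem_rowsOf {l : ℕ} {lam : Fin l → ℕ → ℕ} (h : IsMP l lam) {k : ℕ} (hk : 1 ≤ k)
    (x : Σ _ : Fin l, ℕ) : x ∈ rowsOf lam k ↔ lam x.1 x.2 = k := by
  rw [eq_part_iff (h x.1) hk, rowsOf, Finset.mem_sigma]
  simp

lemma rowCount_eq {l : ℕ} {lam : Fin l → ℕ → ℕ} (h : IsMP l lam) {k : ℕ} (hk : 1 ≤ k) :
    rowCount lam k = (rowsOf lam k).card := by
  unfold rowCount
  rw [← Fintype.card_coe, ← Nat.card_eq_fintype_card]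
  exact Nat.card_congr (Equiv.subtypeEquiv (Equiv.sigmaEquivProd _ _).symm
    (fun x => by simp [mem_rowsOf h hk]))

lemma psiCount_eq (n : ℕ) {l : ℕ} (v : Fin l → ℕ) {lam : Fin l → ℕ → ℕ} (h : IsMP l lam)
    {k : ℕ} (hk : 1 ≤ k) (r : ZMod n) :
    psiCount n v lam k r = ((rowsOf lam k).filter fun x => colour n v x.1 x.2 k = r).card := by
  unfold psiCount
  rw [← Fintype.card_coe, ← Nat.card_eq_fintype_card]
  exact Nat.card_congr (Equiv.subtypeEquiv (Equiv.sigmaEquivProd _ _).symm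
    (fun x => by simp [mem_rowsOf h hk]))

lemma sum_psiCount (n : ℕ) [NeZero n] {l : ℕ} (v : Fin l → ℕ) {lam : Fin l → ℕ → ℕ}
    (h : IsMP l lam) {k : ℕ} (hk : 1 ≤ k) :
    ∑ r, psiCount n v lam k r = rowCount lam k := by
  simp only [psiCount_eq n v h hk, rowCount_eq h hk]
  exact (Finset.card_eq_sum_card_fiberwise (by simp)).symm

/-- Counting the rows in `[a, b)` by the colour of their right end: passing from one colour to
the next telescopes to the two ends of the interval. -/
lemma ico_telescope (n : ℕ) (c i : ZMod n) {a b : ℕ} (hab : a ≤ b) :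
    (∑ x ∈ Finset.Ico a b, if c - (x : ZMod n) - 1 = i then (1 : ℤ) else 0)
      - (∑ x ∈ Finset.Ico a b, if c - (x : ZMod n) - 1 = i - 1 then (1 : ℤ) else 0)
    = (if c - (b : ZMod n) = i then 1 else 0) - (if c - (a : ZMod n) = i then 1 else 0) := by
  induction b, hab using Nat.le_induction with
  | base => simp
  | succ b hb ih =>
    rw [Finset.sum_Ico_succ_top hb, Finset.sum_Ico_succ_top hb]
    have e1 : c - (b : ZMod n) - 1 = i ↔ c - ((b + 1 : ℕ) : ZMod n) = i := by
      rw [Nat.cast_add, Nat.cast_one, sub_sub]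
    have e2 : c - (b : ZMod n) - 1 = i - 1 ↔ c - (b : ZMod n) = i := sub_left_inj
    simp only [e1, e2] at ih ⊢
    linarith

lemma psiCount_sum (n : ℕ) {l : ℕ} (v : Fin l → ℕ) {lam : Fin l → ℕ → ℕ} (h : IsMP l lam)
    {k : ℕ} (hk : 1 ≤ k) (r : ZMod n) :
    (psiCount n v lam k r : ℤ) = ∑ j, ∑ x ∈ Finset.Ico (colHt (lam j) (k + 1)) (colHt (lam j) k),
      if ((k : ZMod n) + v j) - (x : ZMod n) - 1 = r then (1 : ℤ) else 0 := by
  rw [psiCount_eq n v h hk, Finset.card_filter, rowsOf, Finset.sum_sigma]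
  push_cast
  refine Finset.sum_congr rfl fun j _ => Finset.sum_congr rfl fun x _ => ?_
  have : colour n v j x k = ((k : ZMod n) + v j) - (x : ZMod n) - 1 := by
    unfold colour; ring
  rw [this]

lemma eFun_sum (n : ℕ) {l : ℕ} (v : Fin l → ℕ) (lam : Fin l → ℕ → ℕ) (k : ℕ) (i : ZMod n) :
    (eFun n v lam k i : ℤ) = ∑ j, if (v j : ZMod n) + (k : ZMod n)
      - (colHt (lam j) (k + 1) : ZMod n) = i then (1 : ℤ) else 0 := by
  rw [eFun, Nat.card_eq_fintype_card, Fintype.card_subtype, Finset.card_filter]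
  push_cast
  rfl

/-- The increments of `ψ_r(k)` in `r` are read off from two consecutive steps of `π(λ)`. -/
lemma psiCount_step (n : ℕ) {l : ℕ} (v : Fin l → ℕ) {lam : Fin l → ℕ → ℕ} (h : IsMP l lam)
    (k : ℕ) (i : ZMod n) :
    (psiCount n v lam (k + 1) i : ℤ) - psiCount n v lam (k + 1) (i - 1)
      = eFun n v lam k (i - 1) - eFun n v lam (k + 1) i := by
  rw [psiCount_sum n v h (by omega), psiCount_sum n v h (by omega), eFun_sum, eFun_sum,
    ← Finset.sum_sub_distrib, ← Finset.sum_sub_distrib]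
  refine Finset.sum_congr rfl fun j _ => ?_
  rw [ico_telescope n _ i (colHt_anti (h j) (by omega))]
  have e1 : ((k + 1 : ℕ) : ZMod n) + v j - (colHt (lam j) (k + 1) : ZMod n) = i ↔
      (v j : ZMod n) + k - (colHt (lam j) (k + 1) : ZMod n) = i - 1 := by
    rw [eq_sub_iff_add_eq]
    push_cast
    constructor <;> (intro hh; rw [← hh]; ring)
  have e2 : ((k + 1 : ℕ) : ZMod n) + v j = v j + ((k + 1 : ℕ) : ZMod n) := add_comm _ _
  simp only [e1]
  rw [e2]

/-! ### Cylindrical multipartitions -/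

/-- The cyclic successor of a component. -/
def nxt {l : ℕ} (j : Fin l) : Fin l :=
  if h : (j : ℕ) + 1 < l then ⟨j + 1, h⟩ else ⟨0, by have := j.2; omega⟩

/-- The vertical offset between a component and its cyclic successor, so that cylindricity reads
`λ^{(nxt j)}_{i + gap j} ≤ λ^{(j)}_i`. -/
def gap (n : ℕ) {l : ℕ} (v : Fin l → ℕ) (j : Fin l) : ℕ :=
  if (j : ℕ) + 1 < l then v (nxt j) - v j else n + v (nxt j) - v j

lemma nxt_bijective {l : ℕ} : Function.Bijective (nxt (l := l)) := by
  rw [← Finite.injective_iff_bijective]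
  intro a b hab
  have ha := a.2
  have hb := b.2
  unfold nxt at hab
  ext
  split_ifs at hab <;> simp at hab <;> omega

lemma gap_cases {n l : ℕ} {v : Fin l → ℕ} (hv : SortedV n l v) (j : Fin l) :
    ((j : ℕ) + 1 < l ∧ (nxt j : ℕ) = j + 1 ∧ v j + gap n v j = v (nxt j)) ∨
    ((j : ℕ) + 1 = l ∧ (nxt j : ℕ) = 0 ∧ v j + gap n v j = v (nxt j) + n) := by
  have hj := j.2
  by_cases h : (j : ℕ) + 1 < l
  · left
    have e : (nxt j : ℕ) = j + 1 := by simp [nxt, h]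
    have := hv.1 (show j ≤ nxt j by rw [Fin.le_def]; omega)
    refine ⟨h, e, ?_⟩
    simp only [gap, h, if_true]
    omega
  · right
    have e : (nxt j : ℕ) = 0 := by simp [nxt, h]
    have := hv.2 j
    refine ⟨by omega, e, ?_⟩
    simp only [gap, h, if_false]
    omega

lemma cylindrical_iff {n l : ℕ} {v : Fin l → ℕ} (lam : Fin l → ℕ → ℕ) :
    Cylindrical n v lam ↔ ∀ j i, lam (nxt j) (i + gap n v j) ≤ lam j i := by
  constructor
  · rintro ⟨h1, h2⟩ j i
    by_cases h : (j : ℕ) + 1 < l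
    · have e : nxt j = ⟨j + 1, h⟩ := by simp [nxt, h]
      simp only [gap, h, if_true, e]
      exact h1 j h i
    · have hj := j.2
      have e : nxt j = ⟨0, by omega⟩ := by simp [nxt, h]
      have e' : j = ⟨l - 1, by omega⟩ := by ext; simp; omega
      have := h2 (by omega) i
      simp only [gap, h, if_false, e]
      rw [← e'] at this
      exact this
  · intro h
    constructor
    · intro j hj i
      have := h ⟨j, by omega⟩ i
      simpa [gap, nxt, hj] using this
    · intro hl i
      have := h ⟨l - 1, by omega⟩ i
      have e : ¬ (l - 1 + 1 < l) := by omega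
      simpa [gap, nxt, e] using this

/-- Cylindricity across several components, without wrapping around the cylinder. -/
lemma cyl_le {n l : ℕ} {v : Fin l → ℕ} (hv : SortedV n l v) {lam : Fin l → ℕ → ℕ}
    (hmp : IsMP l lam) (hc : Cylindrical n v lam) (j m : Fin l) (hjm : j ≤ m) (i r : ℕ)
    (h : i + v m ≤ r + v j) : lam m r ≤ lam j i := by
  rw [cylindrical_iff] at hc
  obtain ⟨t, ht⟩ : ∃ t : ℕ, (m : ℕ) = j + t := ⟨m - j, by rw [Fin.le_def] at hjm; omega⟩
  induction t generalizing j i with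
  | zero =>
    have : m = j := by ext; omega
    subst this
    exact part_antitone (hmp m) (by omega)
  | succ t ih =>
    have hm := m.2
    rcases gap_cases hv j with ⟨h1, h2, h3⟩ | ⟨h1, -, -⟩
    · refine (ih (nxt j) (by rw [Fin.le_def]; omega) (i + gap n v j) (by omega) (by omega)).trans
        (hc j i)
    · omega

/-- Cylindricity after wrapping once around the cylinder. -/
lemma cyl_le_wrap {n l : ℕ} {v : Fin l → ℕ} (hv : SortedV n l v) {lam : Fin l → ℕ → ℕ}
    (hmp : IsMP l lam) (hc : Cylindrical n v lam) (j m : Fin l) (i r : ℕ)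
    (h : i + v m + n ≤ r + v j) : lam m r ≤ lam j i := by
  have hj := j.2
  obtain ⟨last, hlast⟩ : ∃ a : Fin l, (a : ℕ) + 1 = l := ⟨⟨l - 1, by omega⟩, by simp; omega⟩
  have hjl : j ≤ last := by rw [Fin.le_def]; omega
  have h1 := hv.1 hjl
  have h2 := (cylindrical_iff lam).1 hc last (i + (v last - v j))
  rcases gap_cases hv last with ⟨h3, -, -⟩ | ⟨-, h4, h5⟩
  · omega
  refine (cyl_le hv hmp hc (nxt last) m (by rw [Fin.le_def]; omega) _ r ?_).trans
    (h2.trans (cyl_le hv hmp hc j last hjl i _ (by omega)))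
  omega

/-- If every colour occurs at the right end of some row of length `k`, then the columns `≤ k` of
component `nxt j` still fit, after relabelling, to the left of the columns `> k` of component `j`.
Otherwise the node in column `k` and row `i - gap j` of component `j` has a colour that is missed:
by cylindricity, rows below it are shorter than `k` and rows above it are longer. -/
lemma fits {n l : ℕ} [NeZero n] {v : Fin l → ℕ} (hv : SortedV n l v) {lam : Fin l → ℕ → ℕ}
    (hmp : IsMP l lam) (hc : Cylindrical n v lam) {k : ℕ} (hk : 1 ≤ k)
    (hpos : ∀ r, psiCount n v lam k r ≠ 0) (j : Fin l) (i : ℕ)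
    (hi : ∀ i0, i0 + gap n v j = i → k < lam j i0) : k ≤ lam (nxt j) i := by
  by_contra! hlt
  have h0 := hpos ((k : ZMod n) - ((i : ZMod n) - (gap n v j : ZMod n)) - 1 + (v j : ZMod n))
  rw [psiCount_eq n v hmp hk, Finset.card_ne_zero] at h0
  obtain ⟨⟨m, r⟩, hx⟩ := h0
  rw [Finset.mem_filter, mem_rowsOf hmp hk] at hx
  obtain ⟨hr, hcol⟩ := hx
  simp only at hr hcol
  have hcong : (((r : ℤ) + v j : ℤ) : ZMod n) = (((i : ℤ) - gap n v j + v m : ℤ) : ZMod n) := by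
    unfold colour at hcol
    push_cast
    linear_combination -hcol
  rw [ZMod.intCast_eq_intCast_iff_dvd_sub] at hcong
  obtain ⟨t, ht⟩ := hcong
  have hvm := hv.2 m
  have hvj := hv.2 j
  -- Rows above the chosen node are longer than `k`.
  have above : ((i : ℤ) - gap n v j = r + v j - v m ∧ m ≤ j) ∨
      ((i : ℤ) - gap n v j ≥ r + v j - v m + n) → False := by
    intro hcase
    have hge : gap n v j ≤ i := by
      rcases hcase with ⟨h1, h2⟩ | h1
      · have := hv.1 h2
        omega
      · omega
    have hlong := hi (i - gap n v j) (by omega)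
    rcases hcase with ⟨h1, h2⟩ | h1
    · have := cyl_le hv hmp hc m j h2 r (i - gap n v j) (by omega)
      omega
    · have := cyl_le_wrap hv hmp hc m j r (i - gap n v j) (by omega)
      omega
  have hn : 0 < (n : ℤ) := by exact_mod_cast Nat.pos_of_ne_zero (NeZero.ne n)
  rcases lt_trichotomy t 0 with h | h | h
  · have h1 : (n : ℤ) * t ≤ -n := by nlinarith
    rcases gap_cases hv j with ⟨-, h3, h4⟩ | ⟨-, h3, h4⟩
    · have := cyl_le_wrap hv hmp hc (nxt j) m i r (by omega)
      omega
    · have := cyl_le hv hmp hc (nxt j) m (by rw [Fin.le_def]; omega) i r (by omega)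
      omega
  · subst h
    rcases le_or_gt m j with hmj | hmj
    · exact above (Or.inl ⟨by linarith, hmj⟩)
    · have hm := m.2
      rw [Fin.lt_def] at hmj
      rcases gap_cases hv j with ⟨-, h3, h4⟩ | ⟨h3, -, -⟩
      · have := cyl_le hv hmp hc (nxt j) m (by rw [Fin.le_def]; omega) i r (by omega)
        omega
      · omega
  · have h1 : (n : ℤ) ≤ n * t := by nlinarith
    exact above (Or.inr (by linarith))

/-- The multipartition obtained from `λ` by cyclically relabelling the columns `≤ k` while keeping
the columns `> k`. -/
def lift (n : ℕ) {l : ℕ} (v : Fin l → ℕ) (lam : Fin l → ℕ → ℕ) (k : ℕ) : Fin l → ℕ → ℕ :=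
  fun j i => if k < lam j i then lam j i else min k (lam (nxt j) (i + gap n v j))

lemma lift_isMP {n l : ℕ} {v : Fin l → ℕ} {lam : Fin l → ℕ → ℕ} (hmp : IsMP l lam) (k : ℕ) :
    IsMP l (lift n v lam k) := by
  intro j
  constructor
  · intro i
    have h1 := (hmp j).1 i
    have h2 := (hmp (nxt j)).1 (i + gap n v j)
    rw [show i + gap n v j + 1 = i + 1 + gap n v j by ring] at h2
    simp only [lift]
    split_ifs <;> omega
  · obtain ⟨N, hN⟩ := (hmp j).2
    obtain ⟨M, hM⟩ := (hmp (nxt j)).2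
    refine ⟨N + M, fun i hi => ?_⟩
    simp [lift, hN i (by omega), hM (i + gap n v j) (by omega)]

lemma lift_cyl {n l : ℕ} {v : Fin l → ℕ} {lam : Fin l → ℕ → ℕ} (hc : Cylindrical n v lam)
    (k : ℕ) : Cylindrical n v (lift n v lam k) := by
  rw [cylindrical_iff] at hc ⊢
  intro j i
  have h1 := hc j i
  have h2 := hc (nxt j) (i + gap n v j)
  simp only [lift]
  split_ifs <;> omega

lemma colHt_congr {f g : ℕ → ℕ} {m m' : ℕ} (h : ∀ i, m ≤ f i ↔ m' ≤ g i) :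
    colHt f m = colHt g m' := Nat.card_congr (Equiv.subtypeEquivRight h)

lemma lift_colHt_high {n l : ℕ} {v : Fin l → ℕ} {lam : Fin l → ℕ → ℕ} {k c : ℕ} (hkc : k < c)
    (j : Fin l) : colHt (lift n v lam k j) c = colHt (lam j) c := by
  refine colHt_congr fun i => ?_
  simp only [lift]
  split_ifs <;> omega

lemma lift_colHt_low {n l : ℕ} [NeZero n] {v : Fin l → ℕ} (hv : SortedV n l v)
    {lam : Fin l → ℕ → ℕ} (hmp : IsMP l lam) (hc : Cylindrical n v lam) {k c : ℕ}
    (hpos : ∀ r, psiCount n v lam k r ≠ 0) (hc1 : 1 ≤ c) (hck : c ≤ k) (j : Fin l) :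
    colHt (lift n v lam k j) c + gap n v j = colHt (lam (nxt j)) c := by
  have hfit := fits hv hmp hc (hc1.trans hck) hpos j
  have hlow : ∀ i, c ≤ lift n v lam k j i ↔ c ≤ lam (nxt j) (i + gap n v j) := by
    intro i
    simp only [lift]
    split_ifs with h
    · have := hfit (i + gap n v j) (fun i0 h0 => by
        have : i0 = i := by omega
        rwa [this])
      omega
    · omega
  -- The rows of `nxt j` that have no counterpart in component `j` all reach column `k`.
  have hgap : gap n v j ≤ colHt (lam (nxt j)) c := by
    by_contra! h
    have h1 := hfit (gap n v j - 1) (fun i0 h0 => by omega)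
    have h2 := (le_part_iff (hmp (nxt j)) hc1 (gap n v j - 1)).1 (by omega)
    omega
  have key : ∀ i, i < colHt (lift n v lam k j) c ↔ i + gap n v j < colHt (lam (nxt j)) c := by
    intro i
    rw [← le_part_iff (lift_isMP hmp k j) hc1, ← le_part_iff (hmp (nxt j)) hc1, hlow]
  have a1 := key (colHt (lift n v lam k j) c)
  have a2 := key (colHt (lam (nxt j)) c - gap n v j)
  omega

lemma lift_eFun {n l : ℕ} [NeZero n] {v : Fin l → ℕ} (hv : SortedV n l v)
    {lam : Fin l → ℕ → ℕ} (hmp : IsMP l lam) (hc : Cylindrical n v lam) {k : ℕ}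
    (hpos : ∀ r, psiCount n v lam k r ≠ 0) (m : ℕ) :
    eFun n v (lift n v lam k) m = eFun n v lam m := by
  funext r
  unfold eFun
  by_cases hm : k < m + 1
  · refine Nat.card_congr (Equiv.subtypeEquivRight fun j => ?_)
    rw [lift_colHt_high hm]
  · refine Nat.card_congr (Equiv.subtypeEquiv (Equiv.ofBijective nxt nxt_bijective) fun j => ?_)
    have h1 := lift_colHt_low hv hmp hc hpos (show 1 ≤ m + 1 by omega) (by omega) j
    have h2 : (v j : ZMod n) + gap n v j = v (nxt j) := by
      rcases gap_cases hv j with ⟨-, -, h⟩ | ⟨-, -, h⟩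
      · exact_mod_cast congrArg (Nat.cast : ℕ → ZMod n) h
      · have := congrArg (Nat.cast : ℕ → ZMod n) h
        push_cast at this
        simpa using this
    rw [Equiv.ofBijective_apply, ← h1, ← h2]
    push_cast
    rw [show (v j : ZMod n) + gap n v j + m - (colHt (lift n v lam k j) (m + 1) + gap n v j)
      = v j + m - colHt (lift n v lam k j) (m + 1) by ring]

/-- In a highest-lift, for every `k > 0` some colour does not occur at the right end of a row of
length `k`: otherwise `lift` would be a cylindrical multipartition with the same path and strictly
shorter columns. -/
lemma exists_psi_zero {n l : ℕ} [NeZero n] {v : Fin l → ℕ} (hv : SortedV n l v)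
    {lam : Fin l → ℕ → ℕ} {q : ℕ → ZMod n → ℤ} (h : IsHL n v lam q) {k : ℕ} (hk : 1 ≤ k) :
    ∃ r, psiCount n v lam k r = 0 := by
  by_contra! hpos
  obtain ⟨hmp, hc, hpi, hmax⟩ := h
  have hh := hmax (lift n v lam k) (lift_isMP hmp k) (lift_cyl hc k)
    ⟨fun m => by rw [hpi.1 m, lift_eFun hv hmp hc hpos m], hpi.2⟩
  have hsum : ∑ j, (colHt (lam j) k + gap n v j) ≤ ∑ j, colHt (lam (nxt j)) k :=
    Finset.sum_le_sum fun j _ => by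
      have h1 := hh j k hk
      have h2 := lift_colHt_low hv hmp hc hpos hk le_rfl j
      omega
  rw [Finset.sum_add_distrib,
    Function.Bijective.sum_comp nxt_bijective (fun j => colHt (lam j) k)] at hsum
  have hl : 0 < l := by
    by_contra hl
    have := hpos 0
    rw [psiCount_eq n v hmp hk, Finset.card_ne_zero] at this
    obtain ⟨x, -⟩ := this
    have := x.1.2
    omega
  -- The offsets add up to `n`; that the last one is positive suffices.
  have hg : gap n v ⟨l - 1, by omega⟩ ≤ ∑ j, gap n v j :=
    Finset.single_le_sum (f := fun j => gap n v j) (fun _ _ => Nat.zero_le _) (Finset.mem_univ _)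
  have hv2 := hv.2 ⟨l - 1, by omega⟩
  rcases gap_cases hv ⟨l - 1, by omega⟩ with ⟨h1, -, -⟩ | ⟨-, -, h1⟩
  · simp only at h1
    omega
  · omega

/-! ### Duality -/

/-- `λ` and `♯λ` have the same total number of length-`k` rows for every
`k > 0`. Here `Λ′ = ♯(wtOf n w)` and `Λ″ = wtOf n v''`. -/
theorem sharp_row_counts (n : ℕ) [NeZero n] (hn : 2 ≤ n) (l' l'' : ℕ)
    (w : Fin l' → ℕ) (hw : SortedV n l' w)
    (v'' : Fin l'' → ℕ) (hv'' : SortedV n l'' v'')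
    (p : ℕ → ZMod n → ℤ)
    (hp : IsRes n l'' (sharpWt n (wtOf n w)) (wtOf n v'') p)
    (lam : Fin l'' → ℕ → ℕ)
    (hlam : IsHL n v'' lam (fun k i => p k i - sharpWt n (wtOf n w) i))
    (mu : Fin l' → ℕ → ℕ)
    (hmu : IsHL n w mu (fun k i => sharpPath n p k i - sharpWt n (wtOf n v'') i)) :
    ∀ k : ℕ, 0 < k → rowCount mu k = rowCount lam k := by
  intro k hk
  obtain ⟨k, rfl⟩ : ∃ m, k = m + 1 := ⟨k - 1, by omega⟩
  have hsumL := sum_path n v'' lam _ hlam.2.2.1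
  -- At each time, the steps of `♯p` are the reflected complement of the steps of `p`.
  have hcompl : ∀ m : ℕ, (fun i => (eFun n w mu m i : ℤ)) =
      fun i => p m ((m : ZMod n) - i) - eFun n v'' lam m ((m : ZMod n) - i) := by
    intro m
    apply eq_of_step_of_sum
    · intro i
      have h1 := congrFun (hmu.2.2.1.1 m) i
      have h2 := congrFun (hlam.2.2.1.1 m) ((m : ZMod n) + 1 - i)
      simp only [stepWt, sharpPath, Nat.cast_add, Nat.cast_one] at h1 h2
      have e1 : (m : ZMod n) - (i - 1) = m + 1 - i := by ring
      have e2 : (m : ZMod n) + 1 - i - 1 = m - i := by ring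
      rw [e2] at h2
      simp only [e1]
      linarith
    · have h1 : ∑ i, (eFun n w mu m i : ℤ) = l' := by exact_mod_cast sum_eFun n w mu m
      have h2 : ∑ i, (eFun n v'' lam m i : ℤ) = l'' := by exact_mod_cast sum_eFun n v'' lam m
      have h3 := hsumL m
      rw [Finset.sum_sub_distrib, sum_sharpWt] at h3
      have h4 := Equiv.sum_comp (Equiv.subLeft (m : ZMod n))
        (fun i => p m i - (eFun n v'' lam m i : ℤ))
      simp only [Equiv.subLeft_apply] at h4
      rw [h1, h4, Finset.sum_sub_distrib, h2]
      linarith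
  have hpsi : (fun i => (psiCount n w mu (k + 1) i : ℤ)) =
      fun i => (psiCount n v'' lam (k + 1) ((k : ZMod n) - i) : ℤ) := by
    apply eq_of_step_of_zero
    · intro i
      have h1 := psiCount_step n w hmu.1 k i
      have h2 := psiCount_step n v'' hlam.1 k ((k : ZMod n) + 1 - i)
      have h3 := congrFun (hcompl k) (i - 1)
      have h4 := congrFun (hcompl (k + 1)) i
      have h5 := congrFun (hlam.2.2.1.1 k) ((k : ZMod n) + 1 - i)
      simp only [stepWt, Nat.cast_add, Nat.cast_one] at h3 h4 h5
      have e1 : (k : ZMod n) - (i - 1) = k + 1 - i := by ring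
      have e2 : (k : ZMod n) + 1 - i - 1 = k - i := by ring
      rw [e2] at h2 h5
      rw [e1] at h3
      simp only [e1]
      linarith
    · intro i; positivity
    · intro i; positivity
    · obtain ⟨r, hr⟩ := exists_psi_zero hw hmu (show 1 ≤ k + 1 by omega)
      exact ⟨r, by exact_mod_cast hr⟩
    · obtain ⟨r, hr⟩ := exists_psi_zero hv'' hlam (show 1 ≤ k + 1 by omega)
      exact ⟨(k : ZMod n) - r, by simpa using hr⟩
  rw [← sum_psiCount n w hmu.1 hk, ← sum_psiCount n v'' hlam.1 hk]
  have h1 : ∀ i, psiCount n w mu (k + 1) i = psiCount n v'' lam (k + 1) ((k : ZMod n) - i) :=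
    fun i => by exact_mod_cast congrFun hpsi i
  rw [Finset.sum_congr rfl (fun i _ => h1 i)]
  exact Equiv.sum_comp (Equiv.subLeft (k : ZMod n)) (fun i => psiCount n v'' lam (k + 1) i)

end BF
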